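/- arXiv:math-ph/0602017 — 3 statements merged into one kernel-verified Lean document; each statement's English description precedes it below -/
import Mathlib

section
/- With the notation of the context, the function h is (complex-)differentiable at z and satisfies h(z) = 1 and h'(z) = 0. (This is the algebraic content of the vanishing of the first-order term in the diagonal expansion of the Szegő kernel S[e_m] of Corollary 4.2, equivalently of the vanishing (3.10)/(4.15) of all first partial derivatives of θ[e_m] at 0.) -/
open Finset

/-!
Every factor `((z - λ) / (w - λ)) ^ c` of the kernel equals `1` at `w = z`, so at that point the
derivative of a product of such factors is the sum `-∑ c / (z - λ)` of the individual derivatives,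
which is linear in the exponents. Averaging over `s` therefore replaces each exponent by its mean,
and the means of `a` and `b` vanish: `a` centres the numbers `s / N`, and the fractional parts
occurring in `b` are a cyclic permutation of those numbers.
-/

/-- `f` has the first-order expansion `f w = 1 + f' (w - z) + o(w - z)` at `z`. Functions
normalized in this way multiply by adding their linear coefficients. -/
structure HasUnitJetAt {𝕜 A : Type*} [NontriviallyNormedField 𝕜] [NormedRing A]
    [NormedAlgebra 𝕜 A] (f : 𝕜 → A) (f' : A) (z : 𝕜) : Prop where
  map_eq_one : f z = 1
  hasDerivAt : HasDerivAt f f' z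

namespace HasUnitJetAt

section NormedAlgebra

variable {𝕜 A ι : Type*} [NontriviallyNormedField 𝕜] {z : 𝕜}

theorem mul [NormedRing A] [NormedAlgebra 𝕜 A] {f g : 𝕜 → A} {f' g' : A}
    (hf : HasUnitJetAt f f' z) (hg : HasUnitJetAt g g' z) :
    HasUnitJetAt (fun w ↦ f w * g w) (f' + g') z where
  map_eq_one := by rw [hf.map_eq_one, hg.map_eq_one, one_mul]
  hasDerivAt := (hf.hasDerivAt.fun_mul hg.hasDerivAt).congr_deriv <| by
    rw [hf.map_eq_one, hg.map_eq_one, mul_one, one_mul]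

theorem prod [NormedCommRing A] [NormedAlgebra 𝕜 A] {S : Finset ι} {f : ι → 𝕜 → A} {f' : ι → A}
    (hf : ∀ i ∈ S, HasUnitJetAt (f i) (f' i) z) :
    HasUnitJetAt (fun w ↦ ∏ i ∈ S, f i w) (∑ i ∈ S, f' i) z where
  map_eq_one := prod_eq_one fun i hi ↦ (hf i hi).map_eq_one
  hasDerivAt := by
    classical
    refine (HasDerivAt.fun_finsetProd fun i hi ↦ (hf i hi).hasDerivAt).congr_deriv ?_
    refine sum_congr rfl fun i _ ↦ ?_
    rw [prod_eq_one fun j hj ↦ (hf j (mem_of_mem_erase hj)).map_eq_one, one_smul]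

theorem const_mul_sum [NormedRing A] [NormedAlgebra 𝕜 A] {S : Finset ι} {f : ι → 𝕜 → A}
    {f' : ι → A} {c : A} (hc : c * #S = 1) (hf : ∀ i ∈ S, HasUnitJetAt (f i) (f' i) z) :
    HasUnitJetAt (fun w ↦ c * ∑ i ∈ S, f i w) (c * ∑ i ∈ S, f' i) z where
  map_eq_one := by
    rw [sum_congr rfl fun i hi ↦ (hf i hi).map_eq_one, sum_const, nsmul_one, hc]
  hasDerivAt := (HasDerivAt.fun_sum fun i hi ↦ (hf i hi).hasDerivAt).const_mul c

theorem sub_div_sub {p : 𝕜} (hp : z ≠ p) :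
    HasUnitJetAt (fun w ↦ (z - p) / (w - p)) (-(z - p)⁻¹) z where
  map_eq_one := div_self (sub_ne_zero.mpr hp)
  hasDerivAt := by
    have hzp : z - p ≠ 0 := sub_ne_zero.mpr hp
    have hinv := (((hasDerivAt_id z).sub_const p).fun_inv hzp).const_mul (z - p)
    simp only [id_eq, ← div_eq_mul_inv] at hinv
    exact hinv.congr_deriv (by field_simp)

end NormedAlgebra

theorem cpow_const {f : ℂ → ℂ} {f' z : ℂ} (hf : HasUnitJetAt f f' z) (c : ℂ) :
    HasUnitJetAt (fun w ↦ f w ^ c) (c * f') z where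
  map_eq_one := by rw [hf.map_eq_one, Complex.one_cpow]
  hasDerivAt := by
    have hslit : f z ∈ Complex.slitPlane := hf.map_eq_one ▸ Complex.one_mem_slitPlane
    refine (hf.hasDerivAt.cpow_const (c := c) hslit).congr_deriv ?_
    rw [hf.map_eq_one, Complex.one_cpow, mul_one]

theorem prod_sub_div_sub_cpow {ι : Type*} {S : Finset ι} {p : ι → ℂ} {z : ℂ}
    (hp : ∀ i ∈ S, z ≠ p i) (c : ℂ) :
    HasUnitJetAt (fun w ↦ ∏ i ∈ S, ((z - p i) / (w - p i)) ^ c)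
      (c * ∑ i ∈ S, -(z - p i)⁻¹) z := by
  rw [mul_sum]
  exact prod fun i hi ↦ (sub_div_sub (hp i hi)).cpow_const c

end HasUnitJetAt

theorem sum_range_sub_natCast_div_eq_zero {F : Type*} [Field F] [CharZero F] (N : ℕ) :
    ∑ s ∈ range N, (((N : F) - 1) / (2 * N) - (s : F) / N) = 0 := by
  rcases N.eq_zero_or_pos with rfl | hN
  · exact sum_range_zero _
  have hN₀ : (N : F) ≠ 0 := Nat.cast_ne_zero.mpr hN.ne'
  have gauss : (∑ s ∈ range N, (s : F)) * 2 = N * (N - 1) := by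
    simpa only [Nat.cast_mul, Nat.cast_sum, Nat.cast_ofNat, Nat.cast_pred hN] using
      congrArg (Nat.cast (R := F)) (sum_range_id_mul_two N)
  rw [sum_sub_distrib, sum_const, card_range, nsmul_eq_mul, ← sum_div, sub_eq_zero]
  field_simp
  rw [mul_comm 2, gauss]

theorem sum_range_add_one_eq {M : Type*} [AddCommMonoid M] [IsRightCancelAdd M] {f : ℕ → M}
    {n : ℕ} (hf : f n = f 0) : ∑ i ∈ range n, f (i + 1) = ∑ i ∈ range n, f i :=
  add_right_cancel (b := f 0) <| by rw [← sum_range_succ', sum_range_succ, hf]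

section Fract

variable {F : Type*} [Field F] [LinearOrder F] [IsStrictOrderedRing F] [FloorRing F]

theorem sum_range_fract_add_one_div (N : ℕ) :
    ∑ s ∈ range N, Int.fract (((s : F) + 1) / N) = ∑ s ∈ range N, (s : F) / N := calc
  _ = ∑ s ∈ range N, (((s + 1) % N : ℕ) : F) / N := sum_congr rfl fun s _ ↦ by
    rw [← Nat.cast_add_one, Int.fract_div_natCast_eq_div_natCast_mod]
  _ = ∑ s ∈ range N, ((s % N : ℕ) : F) / N :=
    sum_range_add_one_eq (f := fun s ↦ ((s % N : ℕ) : F) / N) <| by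
      rw [Nat.mod_self, Nat.zero_mod]
  _ = ∑ s ∈ range N, (s : F) / N := sum_congr rfl fun s hs ↦ by
    rw [Nat.mod_eq_of_lt (mem_range.mp hs)]

theorem sum_range_sub_fract_add_one_div_eq_zero (N : ℕ) :
    ∑ s ∈ range N, (((N : F) - 1) / (2 * N) - Int.fract (((s : F) + 1) / N)) = 0 := by
  rw [sum_sub_distrib, sum_range_fract_add_one_div, ← sum_sub_distrib,
    sum_range_sub_natCast_div_eq_zero]

end Fract

theorem szego_em_value_and_first_deriv_general {K : Type*} (N : ℕ) (hN : N ≠ 0) (lam : K → ℂ)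
    (I₁ I₂ J₁ J₂ : Finset K) (z : ℂ) (hz : ∀ k, z ≠ lam k) (a b : ℕ → ℂ)
    (ha : ∑ s ∈ range N, a s = 0) (hb : ∑ s ∈ range N, b s = 0) (h : ℂ → ℂ)
    (hh : ∀ w, h w = (N : ℂ)⁻¹ * ∑ s ∈ range N,
      (∏ i ∈ I₁, ((z - lam i) / (w - lam i)) ^ a s) *
      (∏ j ∈ J₂, ((z - lam j) / (w - lam j)) ^ (-a s)) *
      (∏ i ∈ I₂, ((z - lam i) / (w - lam i)) ^ b s) *
      (∏ j ∈ J₁, ((z - lam j) / (w - lam j)) ^ (-b s))) :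
    h z = 1 ∧ HasDerivAt h 0 z := by
  have factor (S : Finset K) (c : ℂ) :=
    HasUnitJetAt.prod_sub_div_sub_cpow (S := S) (fun k _ ↦ hz k) c
  have summand (s : ℕ) := (((factor I₁ (a s)).mul (factor J₂ (-a s))).mul
    (factor I₂ (b s))).mul (factor J₁ (-b s))
  have hcard : (N : ℂ)⁻¹ * #(range N) = 1 := by
    rw [card_range, inv_mul_cancel₀ (Nat.cast_ne_zero.mpr hN)]
  have mean := HasUnitJetAt.const_mul_sum hcard fun s _ ↦ summand s
  rw [← funext hh] at mean
  refine ⟨mean.map_eq_one, mean.hasDerivAt.congr_deriv ?_⟩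
  simp only [sum_add_distrib, ← sum_mul, sum_neg_distrib, ha, hb, neg_zero, zero_mul, add_zero,
    mul_zero]

/-- Diagonal expansion of the algebraic Szegő kernel `S[e_m]` (Corollary 4.2):
the stripped kernel `h` satisfies `h z = 1` and `h' z = 0`, which is the
vanishing of all first partial derivatives of `θ[e_m]` at `0`. -/
theorem szego_em_value_and_first_deriv
    {K : Type*} [Fintype K] [DecidableEq K]
    (N : ℕ) (hN : 2 ≤ N)
    (lam : K → ℂ) (hlam : Function.Injective lam)
    (I₁ I₂ J₁ J₂ : Finset K)
    (h12 : Disjoint I₁ I₂) (h1J1 : Disjoint I₁ J₁) (h1J2 : Disjoint I₁ J₂)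
    (h2J1 : Disjoint I₂ J₁) (h2J2 : Disjoint I₂ J₂) (hJ12 : Disjoint J₁ J₂)
    (z : ℂ) (hz : ∀ k, z ≠ lam k)
    (a b : ℕ → ℝ)
    (ha : ∀ s, a s = ((N : ℝ) - 1) / (2 * N) - (s : ℝ) / N)
    (hb : ∀ s, b s = ((N : ℝ) - 1) / (2 * N) - Int.fract (((s : ℝ) + 1) / N))
    (h : ℂ → ℂ)
    (hh : ∀ w, h w = (N : ℂ)⁻¹ * ∑ s ∈ Finset.range N,
      (∏ i ∈ I₁, ((z - lam i) / (w - lam i)) ^ ((a s : ℝ) : ℂ)) *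
      (∏ j ∈ J₂, ((z - lam j) / (w - lam j)) ^ ((-(a s) : ℝ) : ℂ)) *
      (∏ i ∈ I₂, ((z - lam i) / (w - lam i)) ^ ((b s : ℝ) : ℂ)) *
      (∏ j ∈ J₁, ((z - lam j) / (w - lam j)) ^ ((-(b s) : ℝ) : ℂ))) :
    h z = 1 ∧ HasDerivAt h 0 z := by
  have ha₀ : ∑ s ∈ range N, a s = 0 := by simp only [ha, sum_range_sub_natCast_div_eq_zero]
  have hb₀ : ∑ s ∈ range N, b s = 0 := by simp only [hb, sum_range_sub_fract_add_one_div_eq_zero]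
  exact szego_em_value_and_first_deriv_general N (by lia) lam I₁ I₂ J₁ J₂ z hz (fun s ↦ a s)
    (fun s ↦ b s) (mod_cast ha₀) (mod_cast hb₀) h (by simpa only [Complex.ofReal_neg] using hh)
end

section
/- With the notation of the context, h is twice (complex-)differentiable at z and its second derivative satisfies h''(z) = 2·φ(z), where φ(z) = ((N²−1)/(24N²))·(F₁² + F₂²) + ((N−1)(N−5)/(12N²))·F₁·F₂, with F₁ = Σ_{i∈I₁} (z − λ_i)^{−1} − Σ_{j∈J₂} (z − λ_j)^{−1} and F₂ = Σ_{i∈I₂} (z − λ_i)^{−1} − Σ_{j∈J₁} (z − λ_j)^{−1}. (This is the second-order coefficient φ[e_m] in the diagonal expansion of the Szegő kernel, Corollary 4.2 of the paper, in the coordinate x = λ where the Schwarzian term vanishes.) -/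
open Finset

/-!
The exponents `b s` are a cyclic shift of the exponents `a s`, so both families sum to zero and have
the same sum of squares, and `∑ a s * b s` follows by polarization, since `a s - b s` is `1 / N`
except for one jump.

Each summand `f` of `h` satisfies `f z = 1` and `f' / f = -(a s * F₁ + b s * F₂)` near `z`, where
`F₁`, `F₂` are regarded as functions of the point. Hence
`f'' z = (a s * F₁ + b s * F₂) ^ 2 - (a s * F₁' + b s * F₂')`; summation over `s` kills the second
bracket and turns the square into the moments of the exponents.
-/

section Exponents

/-- The exponent `a s` of the paper, attached to sheet `s` of an `N`-sheeted cyclic cover. The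
exponent `b s` of the paper is `sheetExponent N ((s + 1) % N)`. -/
noncomputable def sheetExponent (N s : ℕ) : ℝ :=
  ((N : ℝ) - 1) / (2 * N) - s / N

lemma sum_range_succ_mod {M : Type*} [AddCommMonoid M] (f : ℕ → M) (N : ℕ) :
    ∑ s ∈ range N, f ((s + 1) % N) = ∑ s ∈ range N, f s := by
  cases N with
  | zero => rfl
  | succ n =>
    rw [sum_range_succ, sum_range_succ', Nat.mod_self]
    congr 1
    refine sum_congr rfl fun s hs => ?_
    rw [Nat.mod_eq_of_lt (Nat.succ_lt_succ (mem_range.1 hs))]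

lemma sum_range_sheetExponent (N m : ℕ) :
    ∑ s ∈ range m, sheetExponent N s = m * (N - m) / (2 * N) := by
  induction m with
  | zero => simp
  | succ m ih =>
    rw [sum_range_succ, ih, sheetExponent]
    push_cast
    ring

lemma sum_range_sheetExponent_sq (N m : ℕ) :
    ∑ s ∈ range m, sheetExponent N s ^ 2 =
      m * (3 * (N - 1) ^ 2 - 6 * (N - 1) * (m - 1) + 2 * (m - 1) * (2 * m - 1)) /
        (12 * N ^ 2) := by
  induction m with
  | zero => simp
  | succ m ih =>
    rw [sum_range_succ, ih, sheetExponent]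
    push_cast
    ring

lemma sum_sheetExponent (N : ℕ) : ∑ s ∈ range N, sheetExponent N s = 0 := by
  simp [sum_range_sheetExponent]

lemma sum_sheetExponent_sq {N : ℕ} (hN : N ≠ 0) :
    ∑ s ∈ range N, sheetExponent N s ^ 2 = ((N : ℝ) ^ 2 - 1) / (12 * N) := by
  rw [sum_range_sheetExponent_sq]
  field_simp
  ring

lemma sum_sheetExponent_sub_shift_sq {N : ℕ} (hN : N ≠ 0) :
    ∑ s ∈ range N, (sheetExponent N s - sheetExponent N ((s + 1) % N)) ^ 2 =
      ((N : ℝ) - 1) / N := by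
  obtain ⟨n, rfl⟩ := Nat.exists_eq_succ_of_ne_zero hN
  have step : ∀ s ∈ range n,
      (sheetExponent (n + 1) s - sheetExponent (n + 1) ((s + 1) % (n + 1))) ^ 2 =
        (1 / ((n : ℝ) + 1)) ^ 2 := by
    intro s hs
    rw [Nat.mod_eq_of_lt (Nat.succ_lt_succ (mem_range.1 hs)), sheetExponent, sheetExponent]
    push_cast
    ring
  have jump : sheetExponent (n + 1) n - sheetExponent (n + 1) ((n + 1) % (n + 1)) =
      -(n / ((n : ℝ) + 1)) := by
    rw [Nat.mod_self, sheetExponent, sheetExponent]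
    push_cast
    ring
  rw [sum_range_succ, sum_congr rfl step, jump, sum_const, card_range, nsmul_eq_mul]
  push_cast
  field_simp
  ring

lemma sum_sheetExponent_mul_shift {N : ℕ} (hN : N ≠ 0) :
    ∑ s ∈ range N, sheetExponent N s * sheetExponent N ((s + 1) % N) =
      ((N : ℝ) - 1) * (N - 5) / (12 * N) := by
  have polarization : ∀ x y : ℝ, x * y = (x ^ 2 + y ^ 2 - (x - y) ^ 2) / 2 := fun x y => by ring
  simp only [polarization (sheetExponent _ _)]
  rw [← sum_div, sum_sub_distrib, sum_add_distrib,
    sum_range_succ_mod (fun s => sheetExponent N s ^ 2), sum_sheetExponent_sq hN,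
    sum_sheetExponent_sub_shift_sq hN]
  field_simp
  ring

lemma average_sheetExponent_quadratic {N : ℕ} (hN : N ≠ 0) (A B C D : ℂ) :
    (N : ℂ)⁻¹ * ∑ s ∈ range N,
      ((sheetExponent N s * A + sheetExponent N ((s + 1) % N) * B) ^ 2 -
        (sheetExponent N s * C + sheetExponent N ((s + 1) % N) * D)) =
      2 * ((((N : ℂ) ^ 2 - 1) / (24 * (N : ℂ) ^ 2)) * (A ^ 2 + B ^ 2) +
        (((N : ℂ) - 1) * ((N : ℂ) - 5) / (12 * (N : ℂ) ^ 2)) * A * B) := by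
  have first : ∑ s ∈ range N, (sheetExponent N s : ℂ) = 0 := by
    exact_mod_cast sum_sheetExponent N
  have second : ∑ s ∈ range N, (sheetExponent N s : ℂ) ^ 2 = ((N : ℂ) ^ 2 - 1) / (12 * N) := by
    exact_mod_cast congrArg Complex.ofReal (sum_sheetExponent_sq hN)
  have mixed : ∑ s ∈ range N, (sheetExponent N s : ℂ) * sheetExponent N ((s + 1) % N) =
      ((N : ℂ) - 1) * (N - 5) / (12 * N) := by
    exact_mod_cast congrArg Complex.ofReal (sum_sheetExponent_mul_shift hN)
  have expand : ∀ x y : ℂ, (x * A + y * B) ^ 2 - (x * C + y * D) =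
      x ^ 2 * A ^ 2 + y ^ 2 * B ^ 2 + x * y * (2 * A * B) - (x * C + y * D) :=
    fun x y => by ring
  simp only [expand, sum_sub_distrib, sum_add_distrib, ← sum_mul]
  rw [sum_range_succ_mod (fun s => (sheetExponent N s : ℂ) ^ 2),
    sum_range_succ_mod (fun s => (sheetExponent N s : ℂ)), first, second, mixed]
  field_simp
  ring

end Exponents

section LogDeriv

open Topology

variable {𝕜 : Type*} [NontriviallyNormedField 𝕜] [CompleteSpace 𝕜] {z : 𝕜}

lemma iteratedDeriv_two_eq_logDeriv {f : 𝕜 → 𝕜} (hf : AnalyticAt 𝕜 f z) (hfz : f z ≠ 0) :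
    iteratedDeriv 2 f z = (logDeriv f z ^ 2 + deriv (logDeriv f) z) * f z := by
  have hquot : deriv (logDeriv f) z =
      (deriv (deriv f) z * f z - deriv f z * deriv f z) / f z ^ 2 :=
    deriv_div hf.deriv.differentiableAt hf.differentiableAt hfz
  rw [iteratedDeriv_succ, iteratedDeriv_one, hquot, logDeriv_apply]
  field_simp
  ring

lemma logDeriv_mul_eventuallyEq {f g : 𝕜 → 𝕜} (hf : AnalyticAt 𝕜 f z)
    (hg : AnalyticAt 𝕜 g z) (hfz : f z ≠ 0) (hgz : g z ≠ 0) :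
    logDeriv (fun w => f w * g w) =ᶠ[𝓝 z] fun w => logDeriv f w + logDeriv g w := by
  filter_upwards [hf.eventually_analyticAt, hg.eventually_analyticAt,
    hf.continuousAt.eventually_ne hfz, hg.continuousAt.eventually_ne hgz] with w hfw hgw hfw0 hgw0
  exact logDeriv_mul w hfw0 hgw0 hfw.differentiableAt hgw.differentiableAt

lemma logDeriv_prod_eventuallyEq {ι : Type*} {s : Finset ι} {f : ι → 𝕜 → 𝕜}
    (hf : ∀ i ∈ s, AnalyticAt 𝕜 (f i) z) (hfz : ∀ i ∈ s, f i z ≠ 0) :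
    logDeriv (fun w => ∏ i ∈ s, f i w) =ᶠ[𝓝 z] fun w => ∑ i ∈ s, logDeriv (f i) w := by
  have hdiff : ∀ᶠ w in 𝓝 z, ∀ i ∈ s, AnalyticAt 𝕜 (f i) w :=
    (Filter.eventually_all_finset s).2 fun i hi => (hf i hi).eventually_analyticAt
  have hne : ∀ᶠ w in 𝓝 z, ∀ i ∈ s, f i w ≠ 0 :=
    (Filter.eventually_all_finset s).2 fun i hi =>
      (hf i hi).continuousAt.eventually_ne (hfz i hi)
  filter_upwards [hdiff, hne] with w hw hw0
  exact logDeriv_prod hw0 fun i hi => (hw i hi).differentiableAt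

lemma logDeriv_cpow_const {f : ℂ → ℂ} {w : ℂ} (hf : DifferentiableAt ℂ f w)
    (hfw : f w ∈ Complex.slitPlane) (c : ℂ) :
    logDeriv (fun w => f w ^ c) w = c * logDeriv f w := by
  have hfw0 : f w ≠ 0 := Complex.slitPlane_ne_zero hfw
  rw [logDeriv_apply, logDeriv_apply, (hf.hasDerivAt.cpow_const hfw).deriv,
    Complex.cpow_sub _ _ hfw0, Complex.cpow_one]
  have hpow : f w ^ c ≠ 0 := (Complex.cpow_ne_zero_iff).2 (.inl hfw0)
  field_simp

end LogDeriv

section BranchProd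

open Topology

variable {K : Type*} (lam : K → ℂ)

lemma analyticAt_div_sub {z l : ℂ} (hz : z ≠ l) :
    AnalyticAt ℂ (fun w => (z - l) / (w - l)) z :=
  analyticAt_const.div (analyticAt_id.sub analyticAt_const) (sub_ne_zero.2 hz)

lemma div_sub_self_mem_slitPlane {z l : ℂ} (hz : z ≠ l) :
    (z - l) / (z - l) ∈ Complex.slitPlane := by
  rw [div_self (sub_ne_zero.2 hz)]
  exact Complex.one_mem_slitPlane

lemma analyticAt_div_sub_cpow {z l : ℂ} (hz : z ≠ l) (c : ℂ) :
    AnalyticAt ℂ (fun w => ((z - l) / (w - l)) ^ c) z :=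
  (analyticAt_div_sub hz).cpow analyticAt_const (div_sub_self_mem_slitPlane hz)

lemma div_sub_self_cpow {z l : ℂ} (hz : z ≠ l) (c : ℂ) : ((z - l) / (z - l)) ^ c = 1 := by
  rw [div_self (sub_ne_zero.2 hz), Complex.one_cpow]

lemma logDeriv_div_sub_cpow_eventuallyEq {z l : ℂ} (hz : z ≠ l) (c : ℂ) :
    logDeriv (fun w => ((z - l) / (w - l)) ^ c) =ᶠ[𝓝 z] fun w => -c * (w - l)⁻¹ := by
  have hana := analyticAt_div_sub hz
  filter_upwards [hana.eventually_analyticAt, isOpen_ne.mem_nhds hz,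
    hana.continuousAt.eventually_mem
      (Complex.isOpen_slitPlane.mem_nhds (div_sub_self_mem_slitPlane hz))] with w hw hwl hslit
  rw [logDeriv_cpow_const hw.differentiableAt hslit,
    logDeriv_div (f := fun _ => z - l) (g := (· - l)) w (sub_ne_zero.2 hz) (sub_ne_zero.2 hwl)
      (by fun_prop) (by fun_prop)]
  simp [logDeriv_apply]

/-- The rational function `∑ i ∈ I, 1 / (w - λ i) - ∑ j ∈ J, 1 / (w - λ j)`, the logarithmic
derivative of `∏ i ∈ I, (w - λ i) / ∏ j ∈ J, (w - λ j)`. The quantities `F₁`, `F₂` of the paper are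
its values at `z`. -/
noncomputable def poleSum (I J : Finset K) (w : ℂ) : ℂ :=
  (∑ i ∈ I, (w - lam i)⁻¹) - ∑ j ∈ J, (w - lam j)⁻¹

/-- The branch of `(∏ i ∈ I, (w - λ i) / ∏ j ∈ J, (w - λ j)) ^ (-c)` near `z`, normalized to be `1`
at `z` and assembled from principal powers of the ratios `(z - λ k) / (w - λ k)`. -/
noncomputable def branchProd (I J : Finset K) (z c w : ℂ) : ℂ :=
  (∏ i ∈ I, ((z - lam i) / (w - lam i)) ^ c) * ∏ j ∈ J, ((z - lam j) / (w - lam j)) ^ (-c)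

variable {lam} {I I₁ I₂ J J₁ J₂ : Finset K} {z : ℂ}

lemma differentiableAt_poleSum (hI : ∀ i ∈ I, z ≠ lam i) (hJ : ∀ j ∈ J, z ≠ lam j) :
    DifferentiableAt ℂ (poleSum lam I J) z := by
  have inv_sub : ∀ {S : Finset K}, (∀ k ∈ S, z ≠ lam k) →
      DifferentiableAt ℂ (fun w => ∑ k ∈ S, (w - lam k)⁻¹) z := fun hS =>
    DifferentiableAt.fun_sum fun k hk =>
      (differentiableAt_id.sub_const (lam k)).inv (sub_ne_zero.2 (hS k hk))
  exact (inv_sub hI).sub (inv_sub hJ)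

lemma analyticAt_branchProd (hI : ∀ i ∈ I, z ≠ lam i) (hJ : ∀ j ∈ J, z ≠ lam j) (c : ℂ) :
    AnalyticAt ℂ (branchProd lam I J z c) z :=
  (I.analyticAt_fun_prod fun i hi => analyticAt_div_sub_cpow (hI i hi) c).mul
    (J.analyticAt_fun_prod fun j hj => analyticAt_div_sub_cpow (hJ j hj) (-c))

lemma prod_div_sub_self_cpow {S : Finset K} (hS : ∀ k ∈ S, z ≠ lam k) (c : ℂ) :
    ∏ k ∈ S, ((z - lam k) / (z - lam k)) ^ c = 1 :=
  prod_eq_one fun k hk => div_sub_self_cpow (hS k hk) c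

lemma branchProd_self (hI : ∀ i ∈ I, z ≠ lam i) (hJ : ∀ j ∈ J, z ≠ lam j) (c : ℂ) :
    branchProd lam I J z c z = 1 := by
  rw [branchProd, prod_div_sub_self_cpow hI, prod_div_sub_self_cpow hJ, one_mul]

lemma logDeriv_prod_div_sub_cpow_eventuallyEq {S : Finset K} (hS : ∀ k ∈ S, z ≠ lam k) (c : ℂ) :
    logDeriv (fun w => ∏ k ∈ S, ((z - lam k) / (w - lam k)) ^ c) =ᶠ[𝓝 z]
      fun w => -c * ∑ k ∈ S, (w - lam k)⁻¹ := by
  have hfactor : ∀ᶠ w in 𝓝 z, ∀ k ∈ S,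
      logDeriv (fun w => ((z - lam k) / (w - lam k)) ^ c) w = -c * (w - lam k)⁻¹ :=
    (Filter.eventually_all_finset S).2 fun k hk => logDeriv_div_sub_cpow_eventuallyEq (hS k hk) c
  filter_upwards [hfactor, logDeriv_prod_eventuallyEq
    (fun k hk => analyticAt_div_sub_cpow (hS k hk) c)
    (fun k hk => by simp [div_sub_self_cpow (hS k hk)])] with w hw hprod
  rw [hprod, sum_congr rfl hw, mul_sum]

lemma logDeriv_branchProd_eventuallyEq (hI : ∀ i ∈ I, z ≠ lam i) (hJ : ∀ j ∈ J, z ≠ lam j)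
    (c : ℂ) :
    logDeriv (branchProd lam I J z c) =ᶠ[𝓝 z] fun w => -c * poleSum lam I J w := by
  filter_upwards [logDeriv_prod_div_sub_cpow_eventuallyEq hI c,
    logDeriv_prod_div_sub_cpow_eventuallyEq hJ (-c),
    logDeriv_mul_eventuallyEq
      (I.analyticAt_fun_prod fun i hi => analyticAt_div_sub_cpow (hI i hi) c)
      (J.analyticAt_fun_prod fun j hj => analyticAt_div_sub_cpow (hJ j hj) (-c))
      (by simp [prod_div_sub_self_cpow hI]) (by simp [prod_div_sub_self_cpow hJ])]
    with w hwI hwJ hmul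
  refine hmul.trans ?_
  rw [hwI, hwJ, poleSum]
  ring

lemma iteratedDeriv_two_branchProd_mul_branchProd
    (hI₁ : ∀ i ∈ I₁, z ≠ lam i) (hJ₁ : ∀ j ∈ J₁, z ≠ lam j)
    (hI₂ : ∀ i ∈ I₂, z ≠ lam i) (hJ₂ : ∀ j ∈ J₂, z ≠ lam j) (c d : ℂ) :
    iteratedDeriv 2 (fun w => branchProd lam I₁ J₁ z c w * branchProd lam I₂ J₂ z d w) z =
      (c * poleSum lam I₁ J₁ z + d * poleSum lam I₂ J₂ z) ^ 2 -
        (c * deriv (poleSum lam I₁ J₁) z + d * deriv (poleSum lam I₂ J₂) z) := by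
  have hf := analyticAt_branchProd hI₁ hJ₁ c
  have hg := analyticAt_branchProd hI₂ hJ₂ d
  have hfz := branchProd_self hI₁ hJ₁ c
  have hgz := branchProd_self hI₂ hJ₂ d
  have hlog : logDeriv (fun w => branchProd lam I₁ J₁ z c w * branchProd lam I₂ J₂ z d w) =ᶠ[𝓝 z]
      fun w => -c * poleSum lam I₁ J₁ w + -d * poleSum lam I₂ J₂ w :=
    (logDeriv_mul_eventuallyEq hf hg (by simp [hfz]) (by simp [hgz])).trans
      ((logDeriv_branchProd_eventuallyEq hI₁ hJ₁ c).add
        (logDeriv_branchProd_eventuallyEq hI₂ hJ₂ d))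
  have hderiv : deriv (fun w => -c * poleSum lam I₁ J₁ w + -d * poleSum lam I₂ J₂ w) z =
      -c * deriv (poleSum lam I₁ J₁) z + -d * deriv (poleSum lam I₂ J₂) z :=
    (((differentiableAt_poleSum hI₁ hJ₁).hasDerivAt.const_mul (-c)).add
      ((differentiableAt_poleSum hI₂ hJ₂).hasDerivAt.const_mul (-d))).deriv
  rw [iteratedDeriv_two_eq_logDeriv (hf.fun_mul hg) (by simp [hfz, hgz]), hlog.eq_of_nhds,
    hlog.deriv_eq, hderiv, hfz, hgz]
  ring

end BranchProd

theorem szego_em_second_deriv_general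
    {K : Type*} {N : ℕ} (hN : N ≠ 0) {lam : K → ℂ} {I₁ I₂ J₁ J₂ : Finset K} {z : ℂ}
    (hI₁ : ∀ i ∈ I₁, z ≠ lam i) (hI₂ : ∀ i ∈ I₂, z ≠ lam i)
    (hJ₁ : ∀ j ∈ J₁, z ≠ lam j) (hJ₂ : ∀ j ∈ J₂, z ≠ lam j)
    {a b : ℕ → ℝ}
    (ha : ∀ s, a s = ((N : ℝ) - 1) / (2 * N) - (s : ℝ) / N)
    (hb : ∀ s, b s = ((N : ℝ) - 1) / (2 * N) - Int.fract (((s : ℝ) + 1) / N))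
    {h : ℂ → ℂ}
    (hh : ∀ᶠ w in nhds z, h w = (N : ℂ)⁻¹ * ∑ s ∈ range N,
      (∏ i ∈ I₁, ((z - lam i) / (w - lam i)) ^ ((a s : ℝ) : ℂ)) *
      (∏ j ∈ J₂, ((z - lam j) / (w - lam j)) ^ ((-(a s) : ℝ) : ℂ)) *
      (∏ i ∈ I₂, ((z - lam i) / (w - lam i)) ^ ((b s : ℝ) : ℂ)) *
      (∏ j ∈ J₁, ((z - lam j) / (w - lam j)) ^ ((-(b s) : ℝ) : ℂ)))
    {F₁ F₂ : ℂ}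
    (hF₁ : F₁ = (∑ i ∈ I₁, (z - lam i)⁻¹) - ∑ j ∈ J₂, (z - lam j)⁻¹)
    (hF₂ : F₂ = (∑ i ∈ I₂, (z - lam i)⁻¹) - ∑ j ∈ J₁, (z - lam j)⁻¹) :
    (∀ᶠ w in nhds z, DifferentiableAt ℂ h w) ∧
    DifferentiableAt ℂ (deriv h) z ∧
    deriv (deriv h) z =
      2 * ((((N : ℂ) ^ 2 - 1) / (24 * (N : ℂ) ^ 2)) * (F₁ ^ 2 + F₂ ^ 2) +
        (((N : ℂ) - 1) * ((N : ℂ) - 5) / (12 * (N : ℂ) ^ 2)) * F₁ * F₂) := by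
  obtain rfl : a = sheetExponent N := funext ha
  obtain rfl : b = fun s => sheetExponent N ((s + 1) % N) := funext fun s => by
    rw [hb, sheetExponent, ← Int.fract_div_natCast_eq_div_natCast_mod, Nat.cast_succ]
  let f (s : ℕ) (w : ℂ) : ℂ := branchProd lam I₁ J₂ z (sheetExponent N s) w *
    branchProd lam I₂ J₁ z (sheetExponent N ((s + 1) % N)) w
  have hhf : h =ᶠ[nhds z] fun w => (N : ℂ)⁻¹ * ∑ s ∈ range N, f s w := by
    filter_upwards [hh] with w hw
    simp only [hw, f, branchProd, Complex.ofReal_neg, mul_assoc]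
  have hf : ∀ s ∈ range N, AnalyticAt ℂ (f s) z := fun s _ =>
    (analyticAt_branchProd hI₁ hJ₂ _).mul (analyticAt_branchProd hI₂ hJ₁ _)
  have hana : AnalyticAt ℂ h z :=
    (analyticAt_const.mul (analyticAt_fun_sum _ hf)).congr hhf.symm
  refine ⟨hana.eventually_analyticAt.mono fun w hw => hw.differentiableAt,
    hana.deriv.differentiableAt, ?_⟩
  calc deriv (deriv h) z
      = iteratedDeriv 2 (fun w => (N : ℂ)⁻¹ * ∑ s ∈ range N, f s w) z := by
        rw [← hhf.iteratedDeriv_eq, iteratedDeriv_succ, iteratedDeriv_one]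
    _ = (N : ℂ)⁻¹ * ∑ s ∈ range N, iteratedDeriv 2 (f s) z := by
        rw [iteratedDeriv_const_mul_field,
          iteratedDeriv_fun_sum fun s hs => (hf s hs).contDiffAt]
    _ = _ := by
        simp only [f, iteratedDeriv_two_branchProd_mul_branchProd hI₁ hJ₂ hI₂ hJ₁]
        rw [average_sheetExponent_quadratic hN, hF₁, hF₂, poleSum, poleSum]

/-- Second-order coefficient in the diagonal expansion of the algebraic Szegő
kernel `S[e_m]` (Corollary 4.2): `h` is twice differentiable at `z` and
`h'' z = 2 φ[e_m](z)` in the coordinate `x = λ`. -/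
theorem szego_em_second_deriv
    {K : Type*} [Fintype K] [DecidableEq K]
    (N : ℕ) (hN : 2 ≤ N)
    (lam : K → ℂ) (hlam : Function.Injective lam)
    (I₁ I₂ J₁ J₂ : Finset K)
    (h12 : Disjoint I₁ I₂) (h1J1 : Disjoint I₁ J₁) (h1J2 : Disjoint I₁ J₂)
    (h2J1 : Disjoint I₂ J₁) (h2J2 : Disjoint I₂ J₂) (hJ12 : Disjoint J₁ J₂)
    (z : ℂ) (hz : ∀ k, z ≠ lam k)
    (a b : ℕ → ℝ)
    (ha : ∀ s, a s = ((N : ℝ) - 1) / (2 * N) - (s : ℝ) / N)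
    (hb : ∀ s, b s = ((N : ℝ) - 1) / (2 * N) - Int.fract (((s : ℝ) + 1) / N))
    (h : ℂ → ℂ)
    (hh : ∀ w, h w = (N : ℂ)⁻¹ * ∑ s ∈ Finset.range N,
      (∏ i ∈ I₁, ((z - lam i) / (w - lam i)) ^ ((a s : ℝ) : ℂ)) *
      (∏ j ∈ J₂, ((z - lam j) / (w - lam j)) ^ ((-(a s) : ℝ) : ℂ)) *
      (∏ i ∈ I₂, ((z - lam i) / (w - lam i)) ^ ((b s : ℝ) : ℂ)) *
      (∏ j ∈ J₁, ((z - lam j) / (w - lam j)) ^ ((-(b s) : ℝ) : ℂ)))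
    (F₁ F₂ : ℂ)
    (hF₁ : F₁ = (∑ i ∈ I₁, (z - lam i)⁻¹) - ∑ j ∈ J₂, (z - lam j)⁻¹)
    (hF₂ : F₂ = (∑ i ∈ I₂, (z - lam i)⁻¹) - ∑ j ∈ J₁, (z - lam j)⁻¹) :
    (∀ᶠ w in nhds z, DifferentiableAt ℂ h w) ∧
    DifferentiableAt ℂ (deriv h) z ∧
    deriv (deriv h) z =
      2 * ((((N : ℂ) ^ 2 - 1) / (24 * (N : ℂ) ^ 2)) * (F₁ ^ 2 + F₂ ^ 2) +
        (((N : ℂ) - 1) * ((N : ℂ) - 5) / (12 * (N : ℂ) ^ 2)) * F₁ * F₂) :=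
  szego_em_second_deriv_general (by lia) (fun i _ => hz i) (fun i _ => hz i) (fun j _ => hz j)
    (fun j _ => hz j) ha hb (.of_forall hh) hF₁ hF₂
end

section
/- With the notation of the context, h₀ is twice (complex-)differentiable at z and satisfies h₀(z) = 1, h₀'(z) = 0, and h₀''(z) = ((N²−1)/(12N²)) · ( p'(z)/p(z) − q'(z)/q(z) )². (This is the diagonal expansion of the Szegő kernel with zero characteristics, formula (4.12) and the expression for φ[0] following Corollary 4.2.) -/
open Finset

/-!
Every power of `f` satisfies `(f ^ b)' = b (log f)' f ^ b`, so differentiating a combination of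
powers of `f` multiplies each coefficient by its exponent and the whole sum by `(log f)'`.  At a
point where `f = 1` the first two derivatives are therefore governed by the first two moments of
the exponents.  For the Szegő kernel the exponents are centred and equally spaced with step `1 / N`:
their mean is `0` and their variance is `(N² - 1) / (12 N²)`, while `(log f)' = q' / q - p' / p`.
-/

/-- The finite combination `∑ cᵢ f ^ bᵢ` of principal-branch powers of a function `f`.  The
coefficients are kept as parameters since differentiation acts on them by `c ↦ c * b`. -/
noncomputable def cpowSum {ι : Type*} (s : Finset ι) (c b : ι → ℂ) (f : ℂ → ℂ) (w : ℂ) : ℂ :=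
  ∑ i ∈ s, c i * f w ^ b i

namespace cpowSum

variable {ι : Type*} {s : Finset ι} {c b : ι → ℂ} {f : ℂ → ℂ} {z : ℂ}

theorem analyticAt (hf : AnalyticAt ℂ f z) (hfz : f z ∈ Complex.slitPlane) :
    AnalyticAt ℂ (cpowSum s c b f) z :=
  Finset.analyticAt_fun_sum s fun _ _ => analyticAt_const.mul (hf.cpow analyticAt_const hfz)

theorem hasDerivAt (hf : DifferentiableAt ℂ f z) (hfz : f z ∈ Complex.slitPlane) :
    HasDerivAt (cpowSum s c b f) (logDeriv f z * cpowSum s (c * b) b f z) z := by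
  have hsum : HasDerivAt (cpowSum s c b f) (∑ i ∈ s, c i * (b i * f z ^ (b i - 1) * deriv f z)) z :=
    HasDerivAt.fun_sum fun i _ => (hf.hasDerivAt.cpow_const hfz).const_mul (c i)
  refine hsum.congr_deriv ?_
  rw [cpowSum, mul_sum]
  refine sum_congr rfl fun i _ => ?_
  rw [Complex.cpow_sub _ _ (Complex.slitPlane_ne_zero hfz), Complex.cpow_one, logDeriv_apply,
    Pi.mul_apply]
  ring

theorem deriv_eventuallyEq (hf : AnalyticAt ℂ f z) (hfz : f z ∈ Complex.slitPlane) :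
    deriv (cpowSum s c b f) =ᶠ[nhds z] logDeriv f * cpowSum s (c * b) b f := by
  filter_upwards [hf.eventually_analyticAt,
    hf.continuousAt.eventually (Complex.isOpen_slitPlane.mem_nhds hfz)] with w hfw hw
  exact (hasDerivAt hfw.differentiableAt hw).deriv

theorem deriv_deriv (hf : AnalyticAt ℂ f z) (hfz : f z ∈ Complex.slitPlane) :
    deriv (deriv (cpowSum s c b f)) z =
      deriv (logDeriv f) z * cpowSum s (c * b) b f z +
        logDeriv f z ^ 2 * cpowSum s (c * b * b) b f z := by
  have hlog : DifferentiableAt ℂ (logDeriv f) z :=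
    hf.deriv.differentiableAt.div hf.differentiableAt (Complex.slitPlane_ne_zero hfz)
  have hsum := hasDerivAt (s := s) (c := c * b) (b := b) hf.differentiableAt hfz
  rw [(deriv_eventuallyEq hf hfz).deriv_eq, (hlog.hasDerivAt.mul hsum).deriv]
  ring

theorem apply_of_eq_one (hfz : f z = 1) : cpowSum s c b f z = ∑ i ∈ s, c i := by
  simp [cpowSum, hfz]

theorem deriv_of_eq_one (hf : DifferentiableAt ℂ f z) (hfz : f z = 1) :
    deriv (cpowSum s c b f) z = logDeriv f z * ∑ i ∈ s, c i * b i := by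
  rw [(hasDerivAt hf (hfz ▸ Complex.one_mem_slitPlane)).deriv, apply_of_eq_one hfz]
  rfl

theorem deriv_deriv_of_eq_one (hf : AnalyticAt ℂ f z) (hfz : f z = 1) :
    deriv (deriv (cpowSum s c b f)) z =
      deriv (logDeriv f) z * ∑ i ∈ s, c i * b i + logDeriv f z ^ 2 * ∑ i ∈ s, c i * b i ^ 2 := by
  rw [deriv_deriv hf (hfz ▸ Complex.one_mem_slitPlane), apply_of_eq_one hfz, apply_of_eq_one hfz]
  simp only [Pi.mul_apply, mul_assoc, ← sq]

end cpowSum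

/-- The exponent `a(k)` of the `k`-th summand in the Szegő kernel with zero characteristics of a
singular `Z_n` curve, with values in an arbitrary field; it is the junk value `0` when `n = 0`. -/
def szegoExponent (K : Type*) [Field K] (n k : ℕ) : K :=
  ((n : K) - 1) / (2 * n) - (k : K) / n

section Moments

theorem szegoExponent_eq_div (K : Type*) [Field K] (n k : ℕ) :
    szegoExponent K n k = (((n : K) - 1) / 2 - k) / n := by
  rw [szegoExponent, sub_div _ (k : K), div_div]

variable {K : Type*} [Field K] [CharZero K]

theorem sum_range_const_sub_cast (n : ℕ) (x : K) :
    ∑ k ∈ range n, (x - k) = n * x - n * (n - 1) / 2 := by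
  induction n with
  | zero => simp
  | succ n ih => rw [sum_range_succ, ih]; push_cast; ring

theorem sum_range_const_sub_cast_sq (n : ℕ) (x : K) :
    ∑ k ∈ range n, (x - k) ^ 2 =
      n * x ^ 2 - n * (n - 1) * x + n * (n - 1) * (2 * n - 1) / 6 := by
  induction n with
  | zero => simp
  | succ n ih => rw [sum_range_succ, ih]; push_cast; ring

theorem sum_range_szegoExponent (n : ℕ) : ∑ k ∈ range n, szegoExponent K n k = 0 := by
  simp_rw [szegoExponent_eq_div]
  rw [← sum_div, sum_range_const_sub_cast]
  ring

theorem sum_range_szegoExponent_sq {n : ℕ} (hn : n ≠ 0) :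
    ∑ k ∈ range n, szegoExponent K n k ^ 2 = ((n : K) ^ 2 - 1) / (12 * n) := by
  have hn' : (n : K) ≠ 0 := Nat.cast_ne_zero.mpr hn
  simp_rw [szegoExponent_eq_div, div_pow]
  rw [← sum_div, sum_range_const_sub_cast_sq]
  field_simp
  ring

end Moments

section NormedField

variable {𝕜 𝕜' : Type*} [NontriviallyNormedField 𝕜] [NontriviallyNormedField 𝕜']
  [NormedAlgebra 𝕜 𝕜']

theorem logDeriv_mul_const_div_mul_const {f g : 𝕜 → 𝕜'} {x : 𝕜} {a b : 𝕜'}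
    (hf : DifferentiableAt 𝕜 f x) (hg : DifferentiableAt 𝕜 g x) (hfx : f x ≠ 0) (hgx : g x ≠ 0)
    (ha : a ≠ 0) (hb : b ≠ 0) :
    logDeriv (fun y => f y * a / (g y * b)) x = logDeriv f x - logDeriv g x := by
  have hfa : f x * a ≠ 0 := mul_ne_zero hfx ha
  have hgb : g x * b ≠ 0 := mul_ne_zero hgx hb
  rw [logDeriv_div (f := fun y => f y * a) (g := fun y => g y * b) x hfa hgb (hf.mul_const a)
    (hg.mul_const b), logDeriv_mul_const x a ha, logDeriv_mul_const x b hb]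

theorem analyticAt_prod_sub_const {ι : Type*} (s : Finset ι) (r : ι → 𝕜) (x : 𝕜) :
    AnalyticAt 𝕜 (fun y => ∏ i ∈ s, (y - r i)) x :=
  Finset.analyticAt_fun_prod s fun _ _ => analyticAt_id.sub analyticAt_const

end NormedField

theorem szego_zero_char_expansion_general {N : ℕ} (hN : N ≠ 0) {p q : ℂ → ℂ} {z : ℂ}
    (hp : AnalyticAt ℂ p z) (hq : AnalyticAt ℂ q z) (hpz : p z ≠ 0) (hqz : q z ≠ 0)
    {a : ℕ → ℝ} (ha : ∀ s, a s = ((N : ℝ) - 1) / (2 * N) - (s : ℝ) / N)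
    {h₀ : ℂ → ℂ}
    (hh₀ : ∀ w, h₀ w = (N : ℂ)⁻¹ * ∑ s ∈ range N,
      ((q w * p z) / (p w * q z)) ^ ((a s : ℝ) : ℂ)) :
    (∀ᶠ w in nhds z, DifferentiableAt ℂ h₀ w) ∧
    DifferentiableAt ℂ (deriv h₀) z ∧
    h₀ z = 1 ∧ deriv h₀ z = 0 ∧
    deriv (deriv h₀) z =
      (((N : ℂ) ^ 2 - 1) / (12 * (N : ℂ) ^ 2)) *
        (deriv p z / p z - deriv q z / q z) ^ 2 := by
  let R : ℂ → ℂ := fun w => q w * p z / (p w * q z)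
  have hR : AnalyticAt ℂ R z :=
    (hq.mul analyticAt_const).div (hp.mul analyticAt_const) (mul_ne_zero hpz hqz)
  have hRz : R z = 1 := by
    simp only [R, mul_comm (q z), div_self (mul_ne_zero hpz hqz)]
  have hlog : logDeriv R z = logDeriv q z - logDeriv p z :=
    logDeriv_mul_const_div_mul_const hq.differentiableAt hp.differentiableAt hqz hpz hpz hqz
  have hN' : (N : ℂ) ≠ 0 := Nat.cast_ne_zero.mpr hN
  have ha' : ∀ s, (a s : ℂ) = szegoExponent ℂ N s := fun s => by simp [ha, szegoExponent]
  obtain rfl : h₀ = cpowSum (range N) (fun _ => (N : ℂ)⁻¹) (szegoExponent ℂ N) R :=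
    funext fun w => by simp only [hh₀, ha', mul_sum, cpowSum, R]
  have han : AnalyticAt ℂ (cpowSum (range N) (fun _ => (N : ℂ)⁻¹) (szegoExponent ℂ N) R) z :=
    cpowSum.analyticAt hR (hRz ▸ Complex.one_mem_slitPlane)
  refine ⟨han.eventually_analyticAt.mono fun _ hw => hw.differentiableAt,
    han.deriv.differentiableAt, ?_, ?_, ?_⟩
  · simp [cpowSum.apply_of_eq_one hRz, hN']
  · rw [cpowSum.deriv_of_eq_one hR.differentiableAt hRz, ← mul_sum,
      sum_range_szegoExponent, mul_zero, mul_zero]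
  · rw [cpowSum.deriv_deriv_of_eq_one hR hRz, ← mul_sum, ← mul_sum, sum_range_szegoExponent,
      sum_range_szegoExponent_sq hN, hlog, logDeriv_apply, logDeriv_apply]
    field_simp
    ring

/-- Diagonal expansion of the algebraic Szegő kernel with zero characteristics
(formula (4.12) and `φ[0]` after Corollary 4.2): `h₀ z = 1`, `h₀' z = 0` and
`h₀'' z = ((N²−1)/(12N²)) (p'/p − q'/q)²(z)`. -/
theorem szego_zero_char_expansion
    (N m : ℕ) (hN : 2 ≤ N) (hm : 1 ≤ m)
    (lam : ℕ → ℂ)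
    (hlam : ∀ i j, 1 ≤ i → i ≤ 2 * m + 1 → 1 ≤ j → j ≤ 2 * m + 1 → i ≠ j →
      lam i ≠ lam j)
    (p q : ℂ → ℂ)
    (hp : ∀ w, p w = ∏ k ∈ Finset.range (m + 1), (w - lam (2 * k + 1)))
    (hq : ∀ w, q w = ∏ k ∈ Finset.Icc 1 m, (w - lam (2 * k)))
    (z : ℂ) (hz : ∀ k, 1 ≤ k → k ≤ 2 * m + 1 → z ≠ lam k)
    (a : ℕ → ℝ)
    (ha : ∀ s, a s = ((N : ℝ) - 1) / (2 * N) - (s : ℝ) / N)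
    (h₀ : ℂ → ℂ)
    (hh₀ : ∀ w, h₀ w = (N : ℂ)⁻¹ * ∑ s ∈ Finset.range N,
      ((q w * p z) / (p w * q z)) ^ ((a s : ℝ) : ℂ)) :
    (∀ᶠ w in nhds z, DifferentiableAt ℂ h₀ w) ∧
    DifferentiableAt ℂ (deriv h₀) z ∧
    h₀ z = 1 ∧ deriv h₀ z = 0 ∧
    deriv (deriv h₀) z =
      (((N : ℂ) ^ 2 - 1) / (12 * (N : ℂ) ^ 2)) *
        (deriv p z / p z - deriv q z / q z) ^ 2 := by
  obtain rfl := funext hp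
  obtain rfl := funext hq
  have hne : ∀ k, 1 ≤ k → k ≤ 2 * m + 1 → z - lam k ≠ 0 := fun k h₁ h₂ =>
    sub_ne_zero.mpr (hz k h₁ h₂)
  refine szego_zero_char_expansion_general (by omega) (analyticAt_prod_sub_const _ _ z)
    (analyticAt_prod_sub_const _ _ z) (prod_ne_zero_iff.mpr fun k hk => ?_)
    (prod_ne_zero_iff.mpr fun k hk => ?_) ha hh₀
  · exact hne _ (by omega) (by grind)
  · exact hne _ (by grind) (by grind)
end
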